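/- Let E be a real inner product space, let ε ∈ (0, π), and let a be a real number with a·sin(ε/2) > 1. If u₁, u₂, w₁, w₂ are unit vectors in E satisfying (u₁ + u₂) + a·(w₁ + w₂) = 0, then π − θ₂ < ε, where θ₂ ∈ [0, π] is the angle between w₁ and w₂. -/

import Mathlib

/-- The sum of two unit vectors at angle `θ` has norm `2 * cos (θ / 2)`. -/
theorem norm_add_eq_two_mul_cos_half_angle
    {E : Type*} [NormedAddCommGroup E] [InnerProductSpace ℝ E]
    {x y : E} (hx : ‖x‖ = 1) (hy : ‖y‖ = 1) :
    ‖x + y‖ = 2 * Real.cos (InnerProductGeometry.angle x y / 2) := by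
  have hcos : 0 ≤ Real.cos (InnerProductGeometry.angle x y / 2) :=
    Real.cos_nonneg_of_neg_pi_div_two_le_of_le
      (by linarith [InnerProductGeometry.angle_nonneg x y, Real.pi_pos])
      (by linarith [InnerProductGeometry.angle_le_pi x y])
  have hinner := InnerProductGeometry.cos_angle_mul_norm_mul_norm x y
  have hdouble := Real.cos_sq (InnerProductGeometry.angle x y / 2)
  rw [mul_div_cancel₀ _ (two_ne_zero' ℝ)] at hdouble
  rw [hx, hy] at hinner
  refine (sq_eq_sq₀ (norm_nonneg _) (by positivity)).mp ?_
  rw [norm_add_sq_real, hx, hy, mul_pow, hdouble]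
  linarith

/-- Case 2 of the figure-eight example: if `a·sin(ε/2) > 1` and the unit vectors
satisfy `(u₁ + u₂) + a • (w₁ + w₂) = 0`, then the angle `θ₂` between `w₁, w₂`
satisfies `π − θ₂ < ε`. -/
theorem figure_eight_wide_angle
    {E : Type*} [NormedAddCommGroup E] [InnerProductSpace ℝ E]
    (ε : ℝ) (hε0 : 0 < ε) (hεπ : ε < Real.pi)
    (a : ℝ) (ha : 1 < a * Real.sin (ε / 2))
    (u₁ u₂ w₁ w₂ : E) (hu₁ : ‖u₁‖ = 1) (hu₂ : ‖u₂‖ = 1)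
    (hw₁ : ‖w₁‖ = 1) (hw₂ : ‖w₂‖ = 1)
    (hstat : (u₁ + u₂) + a • (w₁ + w₂) = 0) :
    Real.pi - InnerProductGeometry.angle w₁ w₂ < ε := by
  have hsin : 0 < Real.sin (ε / 2) :=
    Real.sin_pos_of_pos_of_lt_pi (by linarith) (by linarith)
  have ha0 : 0 < a := pos_of_mul_pos_left (one_pos.trans ha) hsin.le
  have hnorm : a * ‖w₁ + w₂‖ ≤ 2 := calc
    a * ‖w₁ + w₂‖ = ‖u₁ + u₂‖ := by
      rw [eq_neg_of_add_eq_zero_left hstat, norm_neg, norm_smul, Real.norm_of_nonneg ha0.le]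
    _ ≤ ‖u₁‖ + ‖u₂‖ := norm_add_le _ _
    _ = 2 := by rw [hu₁, hu₂]; norm_num
  rw [norm_add_eq_two_mul_cos_half_angle hw₁ hw₂] at hnorm
  by_contra! hθ
  have hle : Real.sin (ε / 2) ≤ Real.cos (InnerProductGeometry.angle w₁ w₂ / 2) := by
    rw [← Real.cos_pi_div_two_sub]
    exact Real.cos_le_cos_of_nonneg_of_le_pi
      (by linarith [InnerProductGeometry.angle_nonneg w₁ w₂]) (by linarith) (by linarith)
  linarith [mul_le_mul_of_nonneg_left hle ha0.le]
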